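/- Let ‖·‖ be a decomposable norm whose unit-ball extreme points have unit ‖·‖_u-norm, let b = Ax₀ + z, k₀ = K(x₀), c = max_{x ∈ T_{x₀} \ {0}} ‖x‖²/(k₀‖x‖_u²), and let δ ∈ (0,1) and λ > 0 satisfy λ(1 − δ) > ‖A*z‖*; set γ = (λ(1+δ) + ‖A*z‖*)/(λ(1−δ) − ‖A*z‖*). If ω_λ(x) ≤ δλ and ρ₋(A, c(1+γ)² k₀) > 0, then max{ ‖x − x₀‖, (1/(δλ)) (φ_λ(x) − φ_λ(x₀)) } ≤ c k₀ (1+γ) ((1+δ)λ + ‖A*z‖*) / ρ₋(A, c(1+γ)² k₀). -/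

import Mathlib

/-!
The heart of the argument is that a decomposable norm `N` whose atoms (extreme points of the unit
ball) are `u`-unit vectors admits an SVD-like decomposition. If `w ≠ 0` has dual norm `σ`, attained
at an atom `a`, then `w / σ ∈ ∂N(a) = a + (T_aᗮ ∩ C)`, where `C` is the dual unit ball, so
`w = σ a + w'` with `w' ∈ T_aᗮ` (`subdiff_atom`, `exists_atom`). If moreover `w ∈ T_xᗮ`, then
`e_x ± w / σ ∈ C` forces first `a ⟂ e_x`, then `e_x ∈ T_aᗮ`, and finally `a ∈ T_xᗮ`
(`atom_mem_orth`). Peeling off atoms one at a time, with the dimension of the ambient subspace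
dropping at each step, yields `y ∈ T_xᗮ ∩ C` with `⟪y, w⟫ = N w`, for every `w ∈ T_xᗮ`
(`exists_dual_certificate`).

Hence, with `h = x - x₀ = p + w` split along `T_{x₀} ⊕ T_{x₀}ᗮ`, the subgradient `e_{x₀} + y` gives
`N x - N x₀ ≥ N w - N p`. Near-optimality of `x` gives
`λ (N x - N x₀) + ‖A h‖² ≤ (δ λ + ‖A* z‖*) N h`, and the two together yield the cone condition
`N w ≤ γ N p` and `‖A h‖² ≤ ((1 + δ) λ + ‖A* z‖*) N p`. Since `(N p)² ≤ c k₀ ‖p‖ᵤ² ≤ c k₀ ‖h‖ᵤ²`,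
the restricted isometry bound applies to `h` and the estimate for `N h` follows; the one for `φ_λ`
follows by convexity.
-/

open Matrix

namespace PGH

variable {n m : ℕ}

/-- The inner product `⟪x, y⟫ = xᵀ B y` on `ℝⁿ` induced by a matrix `B`. -/
def ip (B : Matrix (Fin n) (Fin n) ℝ) (x y : Fin n → ℝ) : ℝ :=
  dotProduct x (B.mulVec y)

/-- The norm `‖x‖ᵤ = √(xᵀ B x)` induced by the inner product. -/
noncomputable def normu (B : Matrix (Fin n) (Fin n) ℝ) (x : Fin n → ℝ) : ℝ :=
  Real.sqrt (ip B x x)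

/-- `N` is a norm on `ℝⁿ`. -/
structure IsNorm (N : (Fin n → ℝ) → ℝ) : Prop where
  nonneg : ∀ x, 0 ≤ N x
  eq_zero_iff : ∀ x, N x = 0 ↔ x = 0
  triangle : ∀ x y, N (x + y) ≤ N x + N y
  smul_eq : ∀ (c : ℝ) (x), N (c • x) = |c| * N x

/-- The dual norm `‖y‖* = sup {⟪y, x⟫ : N x ≤ 1}`. -/
noncomputable def dualNorm (B : Matrix (Fin n) (Fin n) ℝ) (N : (Fin n → ℝ) → ℝ)
    (y : Fin n → ℝ) : ℝ :=
  sSup ((fun x => ip B y x) '' {x | N x ≤ 1})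

/-- The subdifferential of `N` at `x` with respect to `⟪·,·⟫`. -/
def subdiff (B : Matrix (Fin n) (Fin n) ℝ) (N : (Fin n → ℝ) → ℝ) (x : Fin n → ℝ) :
    Set (Fin n → ℝ) :=
  {z | ∀ y, N x + ip B z (y - x) ≤ N y}

/-- The set `G` of extreme points of the unit ball of `N`. -/
def extPts (N : (Fin n → ℝ) → ℝ) : Set (Fin n → ℝ) :=
  Set.extremePoints ℝ {x | N x ≤ 1}

/-- The orthogonal complement (w.r.t. `⟪·,·⟫`) of a subspace `T`, as a set. -/
def perp (B : Matrix (Fin n) (Fin n) ℝ) (T : Submodule ℝ (Fin n → ℝ)) :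
    Set (Fin n → ℝ) :=
  {v | ∀ u ∈ T, ip B u v = 0}

/-- A decomposability structure for the norm `N`: for every `x` there are a subspace `T x`
and a vector `e x ∈ T x` with `∂N(x) = {e x + v : v ∈ (T x)ᗮ, ‖v‖* ≤ 1}`. -/
structure DecompStruct (B : Matrix (Fin n) (Fin n) ℝ) (N : (Fin n → ℝ) → ℝ) where
  T : (Fin n → ℝ) → Submodule ℝ (Fin n → ℝ)
  e : (Fin n → ℝ) → (Fin n → ℝ)
  e_mem : ∀ x, e x ∈ T x
  subdiff_eq : ∀ x, subdiff B N x =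
    {ξ | ∃ v ∈ perp B (T x), dualNorm B N v ≤ 1 ∧ ξ = e x + v}

/-- `K x = ‖e x‖ᵤ²`. -/
noncomputable def Kfun (B : Matrix (Fin n) (Fin n) ℝ) (N : (Fin n → ℝ) → ℝ)
    (D : DecompStruct B N) (x : Fin n → ℝ) : ℝ :=
  (normu B (D.e x)) ^ 2

/-- Squared Euclidean norm `‖v‖₂²` on `ℝᵐ`. -/
def sq2 (v : Fin m → ℝ) : ℝ := dotProduct v v

/-- The least-squares loss `f(x) = ½ ‖A x - b‖₂²`. -/
noncomputable def fls (A : Matrix (Fin m) (Fin n) ℝ) (b : Fin m → ℝ) (x : Fin n → ℝ) : ℝ :=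
  (1 / 2) * sq2 (A.mulVec x - b)

/-- The adjoint `A* = B⁻¹ Aᵀ` of `A` w.r.t. `⟪·,·⟫`. -/
noncomputable def Astar (B : Matrix (Fin n) (Fin n) ℝ) (A : Matrix (Fin m) (Fin n) ℝ) :
    Matrix (Fin n) (Fin m) ℝ := B⁻¹ * Aᵀ

/-- The gradient `∇f(x) = A*(A x - b)` of the least-squares loss w.r.t. `⟪·,·⟫`. -/
noncomputable def gradf (B : Matrix (Fin n) (Fin n) ℝ) (A : Matrix (Fin m) (Fin n) ℝ)
    (b : Fin m → ℝ) (x : Fin n → ℝ) : Fin n → ℝ :=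
  (Astar B A).mulVec (A.mulVec x - b)

/-- `ρ` is a valid lower restricted isometry constant of `A` at level `k`. -/
def IsLowerRIP (B : Matrix (Fin n) (Fin n) ℝ) (N : (Fin n → ℝ) → ℝ)
    (A : Matrix (Fin m) (Fin n) ℝ) (k ρ : ℝ) : Prop :=
  0 < ρ ∧ ∀ x : Fin n → ℝ, (N x) ^ 2 ≤ k * (normu B x) ^ 2 →
    ρ * (normu B x) ^ 2 ≤ sq2 (A.mulVec x)

/-- `ρ` is a valid upper restricted isometry constant of `A` at level `k`. -/
def IsUpperRIP (B : Matrix (Fin n) (Fin n) ℝ) (N : (Fin n → ℝ) → ℝ)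
    (A : Matrix (Fin m) (Fin n) ℝ) (k ρ : ℝ) : Prop :=
  0 < ρ ∧ ∀ x : Fin n → ℝ, (N x) ^ 2 ≤ k * (normu B x) ^ 2 →
    sq2 (A.mulVec x) ≤ ρ * (normu B x) ^ 2

/-- The regularized objective `φ_λ(x) = f(x) + λ N(x)`. -/
noncomputable def phi (A : Matrix (Fin m) (Fin n) ℝ) (b : Fin m → ℝ)
    (N : (Fin n → ℝ) → ℝ) (lam : ℝ) (x : Fin n → ℝ) : ℝ :=
  fls A b x + lam * N x

/-- The proximal model `m_{λ,L}(y, x)`. -/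
noncomputable def mdl (B : Matrix (Fin n) (Fin n) ℝ) (A : Matrix (Fin m) (Fin n) ℝ)
    (b : Fin m → ℝ) (N : (Fin n → ℝ) → ℝ) (lam L : ℝ) (y x : Fin n → ℝ) : ℝ :=
  fls A b y + ip B (gradf B A b y) (x - y) + (L / 2) * (normu B (x - y)) ^ 2 + lam * N x

/-- `xp = Prox_{λ,L}(y)`, i.e. `xp` minimizes `m_{λ,L}(y, ·)`. -/
def IsProx (B : Matrix (Fin n) (Fin n) ℝ) (A : Matrix (Fin m) (Fin n) ℝ)
    (b : Fin m → ℝ) (N : (Fin n → ℝ) → ℝ) (lam L : ℝ) (y xp : Fin n → ℝ) : Prop :=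
  ∀ u, mdl B A b N lam L y xp ≤ mdl B A b N lam L y u

/-- `ω_λ(x) = min_{ξ ∈ ∂N(x)} ‖λ ξ + ∇f(x)‖*`. -/
noncomputable def omega (B : Matrix (Fin n) (Fin n) ℝ) (A : Matrix (Fin m) (Fin n) ℝ)
    (b : Fin m → ℝ) (N : (Fin n → ℝ) → ℝ) (lam : ℝ) (x : Fin n → ℝ) : ℝ :=
  sInf ((fun ξ => dualNorm B N (lam • ξ + gradf B A b x)) '' subdiff B N x)

/-- Assumption 1 of the paper, phrased for given valid restricted isometry constants
`ρlow = ρ₋(A, c k₀ (1+γ)²)`, `ρlow2 = ρ₋(A, 72 r c k₀ (1+γ) γinc)` and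
`ρup2 = ρ₊(A, 72 r c k₀ (1+γ) γinc)`. -/
def Assumption1 (B : Matrix (Fin n) (Fin n) ℝ) (N : (Fin n → ℝ) → ℝ)
    (A : Matrix (Fin m) (Fin n) ℝ) (z : Fin m → ℝ)
    (c k₀ γinc lamtgt r δ γ ρlow ρlow2 ρup2 : ℝ) : Prop :=
  dualNorm B N ((Astar B A).mulVec z) ≤ lamtgt / 4 ∧
  1 < r ∧ 0 < δ ∧ δ ≤ 1 / 4 ∧
  γ = (lamtgt * (1 + δ) + dualNorm B N ((Astar B A).mulVec z)) /
      (lamtgt * (1 - δ) - dualNorm B N ((Astar B A).mulVec z)) ∧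
  IsLowerRIP B N A (c * k₀ * (1 + γ) ^ 2) ρlow ∧
  IsLowerRIP B N A (72 * r * c * k₀ * (1 + γ) * γinc) ρlow2 ∧
  IsUpperRIP B N A (72 * r * c * k₀ * (1 + γ) * γinc) ρup2 ∧
  ρlow / ρup2 > c / r

/-- One backtracking step: `M` is the smallest element of `{Lt γinc^j : j ≥ 0}`
for which the proximal point is accepted, and `xt1` is that proximal point. -/
def BacktrackMin (B : Matrix (Fin n) (Fin n) ℝ) (A : Matrix (Fin m) (Fin n) ℝ)
    (b : Fin m → ℝ) (N : (Fin n → ℝ) → ℝ) (lam γinc Lt : ℝ)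
    (xt : Fin n → ℝ) (M : ℝ) (xt1 : Fin n → ℝ) : Prop :=
  (∃ j : ℕ, M = Lt * γinc ^ j) ∧
  IsProx B A b N lam M xt xt1 ∧
  phi A b N lam xt1 ≤ mdl B A b N lam M xt xt1 ∧
  ∀ j : ℕ, Lt * γinc ^ j < M →
    ∀ u, IsProx B A b N lam (Lt * γinc ^ j) xt u →
      ¬ phi A b N lam u ≤ mdl B A b N lam (Lt * γinc ^ j) xt u

/-- The iterates of the proximal-gradient subroutine with backtracking. -/
structure ProxGradSeq (B : Matrix (Fin n) (Fin n) ℝ) (A : Matrix (Fin m) (Fin n) ℝ)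
    (b : Fin m → ℝ) (N : (Fin n → ℝ) → ℝ) (lam γinc γdec Lmin : ℝ)
    (x : ℕ → Fin n → ℝ) (L M : ℕ → ℝ) : Prop where
  step : ∀ t, BacktrackMin B A b N lam γinc (L t) (x t) (M (t + 1)) (x (t + 1))
  Lupdate : ∀ t, L (t + 1) = max Lmin (M (t + 1) / γdec)

/-- The quantity `‖M (x⁻ - x) + ∇f(x) - ∇f(x⁻)‖*` used in the stopping criterion. -/
noncomputable def stopQ (B : Matrix (Fin n) (Fin n) ℝ) (A : Matrix (Fin m) (Fin n) ℝ)
    (b : Fin m → ℝ) (N : (Fin n → ℝ) → ℝ) (Mt : ℝ) (xprev xcur : Fin n → ℝ) : ℝ :=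
  dualNorm B N (Mt • (xprev - xcur) + (gradf B A b xcur - gradf B A b xprev))


/-! ### The inner product -/

section Inner

variable {n m : ℕ} {B : Matrix (Fin n) (Fin n) ℝ}

lemma ip_add_left (x y w : Fin n → ℝ) : ip B (x + y) w = ip B x w + ip B y w := by
  simp [ip, add_dotProduct]

lemma ip_add_right (x y w : Fin n → ℝ) : ip B w (x + y) = ip B w x + ip B w y := by
  simp [ip, mulVec_add, dotProduct_add]

lemma ip_sub_left (x y w : Fin n → ℝ) : ip B (x - y) w = ip B x w - ip B y w := by
  simp [ip, sub_dotProduct]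

lemma ip_sub_right (x y w : Fin n → ℝ) : ip B w (x - y) = ip B w x - ip B w y := by
  simp [ip, mulVec_sub, dotProduct_sub]

lemma ip_smul_left (t : ℝ) (x w : Fin n → ℝ) : ip B (t • x) w = t * ip B x w := by
  simp [ip]

lemma ip_smul_right (t : ℝ) (x w : Fin n → ℝ) : ip B w (t • x) = t * ip B w x := by
  simp [ip, mulVec_smul]

lemma ip_zero_left (w : Fin n → ℝ) : ip B 0 w = 0 := by simp [ip]

lemma ip_zero_right (w : Fin n → ℝ) : ip B w 0 = 0 := by simp [ip]

lemma transpose_eq (hB : B.PosDef) : Bᵀ = B := by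
  simpa using hB.isHermitian.eq

lemma ip_comm (hB : B.PosDef) (x y : Fin n → ℝ) : ip B x y = ip B y x := by
  unfold ip
  rw [dotProduct_comm x, dotProduct_mulVec, ← mulVec_transpose, transpose_eq hB,
    dotProduct_comm, dotProduct_comm]

lemma ip_self_pos (hB : B.PosDef) {x : Fin n → ℝ} (hx : x ≠ 0) : 0 < ip B x x := by
  simpa [ip] using hB.dotProduct_mulVec_pos hx

lemma ip_self_nonneg (hB : B.PosDef) (x : Fin n → ℝ) : 0 ≤ ip B x x := by
  by_cases hx : x = 0
  · simp [hx, ip]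
  · exact (ip_self_pos hB hx).le

lemma eq_zero_of_ip_self (hB : B.PosDef) {x : Fin n → ℝ} (h : ip B x x = 0) : x = 0 := by
  by_contra hx
  exact (ip_self_pos hB hx).ne' h

lemma normu_sq (hB : B.PosDef) (x : Fin n → ℝ) : (normu B x) ^ 2 = ip B x x :=
  Real.sq_sqrt (ip_self_nonneg hB x)

lemma ip_astar (hB : B.PosDef) (A : Matrix (Fin m) (Fin n) ℝ) (v : Fin m → ℝ) (h : Fin n → ℝ) :
    ip B ((Astar B A).mulVec v) h = dotProduct v (A.mulVec h) := by
  have hdet : IsUnit B.det := (Matrix.isUnit_iff_isUnit_det _).1 hB.isUnit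
  rw [ip_comm hB]
  unfold ip Astar
  rw [mulVec_mulVec, ← Matrix.mul_assoc, Matrix.mul_nonsing_inv _ hdet, Matrix.one_mul,
    mulVec_transpose, dotProduct_comm, ← dotProduct_mulVec]

/-- Cauchy–Schwarz for two `u`-unit vectors, in the form needed for atoms. -/
lemma ip_le_one (hB : B.PosDef) {x y : Fin n → ℝ} (hx : ip B x x = 1) (hy : ip B y y = 1) :
    ip B x y ≤ 1 := by
  have h := ip_self_nonneg hB (x - y)
  rw [ip_sub_left, ip_sub_right, ip_sub_right, ip_comm hB y x] at h
  linarith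

/-- The `B`-orthogonal complement of `T`, as a submodule; its carrier is `perp B T`. -/
noncomputable def orth (B : Matrix (Fin n) (Fin n) ℝ) (T : Submodule ℝ (Fin n → ℝ)) :
    Submodule ℝ (Fin n → ℝ) where
  carrier := perp B T
  add_mem' ha hb u hu := by rw [ip_add_right, ha u hu, hb u hu, add_zero]
  zero_mem' u _ := ip_zero_right u
  smul_mem' t x hx u hu := by rw [ip_smul_right, hx u hu, mul_zero]

lemma mem_orth {T : Submodule ℝ (Fin n → ℝ)} {v : Fin n → ℝ} :
    v ∈ orth B T ↔ ∀ u ∈ T, ip B u v = 0 := Iff.rfl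

lemma exists_split (hB : B.PosDef) (T : Submodule ℝ (Fin n → ℝ)) (h : Fin n → ℝ) :
    ∃ p ∈ T, ∃ w ∈ orth B T, p + w = h := by
  have hsymm : (Matrix.toBilin' B).IsRefl := by
    intro x y hxy
    rw [Matrix.toBilin'_apply'] at hxy ⊢
    exact (ip_comm hB y x).trans hxy
  have hc : IsCompl T (LinearMap.BilinForm.orthogonal (Matrix.toBilin' B) T) := by
    rw [LinearMap.BilinForm.isCompl_orthogonal_iff_disjoint hsymm]
    rw [Submodule.disjoint_def]
    intro x hx hx'
    have := hx' x hx
    rw [Matrix.toBilin'_apply'] at this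
    exact eq_zero_of_ip_self hB this
  have hh : h ∈ T ⊔ (LinearMap.BilinForm.orthogonal (Matrix.toBilin' B) T) := by
    rw [hc.sup_eq_top]; trivial
  obtain ⟨p, hp, w, hw, e⟩ := Submodule.mem_sup.1 hh
  refine ⟨p, hp, w, fun u hu => ?_, e⟩
  have := hw u hu
  rwa [Matrix.toBilin'_apply'] at this

end Inner

/-! ### The norm and its dual -/

section Norm

variable {n : ℕ} {B : Matrix (Fin n) (Fin n) ℝ} {N : (Fin n → ℝ) → ℝ}

lemma IsNorm.zero (hN : IsNorm N) : N 0 = 0 := (hN.eq_zero_iff 0).2 rfl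

lemma IsNorm.neg (hN : IsNorm N) (x : Fin n → ℝ) : N (-x) = N x := by
  have := hN.smul_eq (-1) x
  simpa using this

lemma IsNorm.continuous (hN : IsNorm N) : Continuous N := by
  have hconv : ConvexOn ℝ Set.univ N := by
    refine ⟨convex_univ, fun x _ y _ a b ha hb _ => ?_⟩
    refine (hN.triangle _ _).trans_eq ?_
    rw [hN.smul_eq, hN.smul_eq, abs_of_nonneg ha, abs_of_nonneg hb, smul_eq_mul, smul_eq_mul]
  rw [← continuousOn_univ]
  exact hconv.continuousOn isOpen_univ

lemma IsNorm.isCompact_ball (hN : IsNorm N) : IsCompact {x | N x ≤ 1} := by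
  have hcl : IsClosed {x | N x ≤ 1} := isClosed_le hN.continuous continuous_const
  obtain ⟨r, hr, hmin⟩ := (isCompact_sphere (0 : Fin n → ℝ) 1).exists_forall_le'
    hN.continuous.continuousOn (a := 0) (fun x hx => by
      refine lt_of_le_of_ne (hN.nonneg x) fun h => ?_
      have h0 := (hN.eq_zero_iff x).1 h.symm
      simp [h0] at hx)
  refine Metric.isCompact_of_isClosed_isBounded hcl
    ((Metric.isBounded_closedBall (x := (0 : Fin n → ℝ)) (r := 1 / r)).subset fun x hx => ?_)
  rw [mem_closedBall_zero_iff, le_div_iff₀ hr]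
  by_cases h0 : x = 0
  · simp [h0]
  have hx0 : 0 < ‖x‖ := norm_pos_iff.2 h0
  have h1 := hmin (‖x‖⁻¹ • x) (by simp [norm_smul, hx0.ne'])
  rw [hN.smul_eq, abs_of_pos (inv_pos.2 hx0), inv_mul_eq_div, le_div_iff₀ hx0] at h1
  have hx1 : N x ≤ 1 := hx
  linarith

lemma continuous_ip (y : Fin n → ℝ) : Continuous (fun x => ip B y x) := by
  unfold ip
  fun_prop

lemma bddAbove_dual (hN : IsNorm N) (y : Fin n → ℝ) :
    BddAbove ((fun x => ip B y x) '' {x | N x ≤ 1}) :=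
  (hN.isCompact_ball.image (continuous_ip y)).bddAbove

lemma dualNorm_nonneg (hN : IsNorm N) (y : Fin n → ℝ) : 0 ≤ dualNorm B N y :=
  le_csSup (bddAbove_dual hN y) ⟨0, by simp [hN.zero], ip_zero_right y⟩

/-- The generalized Hölder inequality. -/
lemma ip_le_dualNorm (hN : IsNorm N) (y x : Fin n → ℝ) : ip B y x ≤ dualNorm B N y * N x := by
  by_cases h0 : x = 0
  · simp [h0, hN.zero, ip_zero_right]
  have hx : 0 < N x :=
    lt_of_le_of_ne (hN.nonneg x) fun h => h0 ((hN.eq_zero_iff x).1 h.symm)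
  have h : ip B y ((N x)⁻¹ • x) ≤ dualNorm B N y := by
    refine le_csSup (bddAbove_dual hN y) ⟨_, ?_, rfl⟩
    simp [hN.smul_eq, abs_of_pos hx, hx.ne']
  rwa [ip_smul_right, inv_mul_le_iff₀ hx, mul_comm] at h

lemma ip_le_mul (hN : IsNorm N) {y : Fin n → ℝ} {t : ℝ} (hy : dualNorm B N y ≤ t)
    (x : Fin n → ℝ) : ip B y x ≤ t * N x :=
  (ip_le_dualNorm hN y x).trans (mul_le_mul_of_nonneg_right hy (hN.nonneg x))

lemma dualNorm_le_one (hN : IsNorm N) {y : Fin n → ℝ} (h : ∀ x, ip B y x ≤ N x) :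
    dualNorm B N y ≤ 1 := by
  refine csSup_le ⟨_, 0, by simp [hN.zero], rfl⟩ ?_
  rintro _ ⟨x, hx, rfl⟩
  exact (h x).trans hx

lemma dualNorm_zero_le (hN : IsNorm N) : dualNorm B N 0 ≤ 1 :=
  dualNorm_le_one hN fun x => by rw [ip_zero_left]; exact hN.nonneg x

lemma dualNorm_neg_le (hN : IsNorm N) {y : Fin n → ℝ} (h : dualNorm B N y ≤ 1) :
    dualNorm B N (-y) ≤ 1 := by
  refine dualNorm_le_one hN fun x => ?_
  have := ip_le_mul hN h (-x)
  rw [hN.neg, one_mul] at this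
  simpa [ip, mulVec_neg] using this

lemma mem_subdiff_iff (hN : IsNorm N) {ξ x : Fin n → ℝ} :
    ξ ∈ subdiff B N x ↔ dualNorm B N ξ ≤ 1 ∧ ip B ξ x = N x := by
  constructor
  · intro h
    have h0 := h 0
    have h2 := h ((2 : ℝ) • x)
    rw [ip_sub_right, ip_zero_right, hN.zero] at h0
    rw [ip_sub_right, ip_smul_right, hN.smul_eq, abs_of_pos two_pos] at h2
    have he : ip B ξ x = N x := by linarith
    refine ⟨dualNorm_le_one hN fun y => ?_, he⟩
    have := h y
    rw [ip_sub_right] at this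
    linarith
  · rintro ⟨h1, h2⟩ y
    have := ip_le_mul hN h1 y
    rw [ip_sub_right]
    linarith

/-- The dual norm is attained at an extreme point of the unit ball. -/
lemma exists_extPt (hN : IsNorm N) (y : Fin n → ℝ) :
    ∃ a ∈ extPts N, ip B y a = dualNorm B N y := by
  obtain ⟨b, hb, hbe, hmax⟩ := hN.isCompact_ball.exists_sSup_image_eq_and_ge
    ⟨0, by simp [hN.zero]⟩ (continuous_ip (B := B) y).continuousOn
  let l : StrongDual ℝ (Fin n → ℝ) :=
    { toFun := fun x => ip B y x
      map_add' := fun x x' => ip_add_right x x' y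
      map_smul' := fun t x => ip_smul_right t x y
      cont := continuous_ip y }
  have hexp : IsExposed ℝ {x | N x ≤ 1} (l.toExposed {x | N x ≤ 1}) := ContinuousLinearMap.toExposed.isExposed
  obtain ⟨a, ha⟩ := (hexp.isCompact hN.isCompact_ball).extremePoints_nonempty ⟨b, hb, hmax⟩
  refine ⟨a, hexp.isExtreme.extremePoints_subset_extremePoints ha, ?_⟩
  have hba : ip B y b ≤ ip B y a := ha.1.2 b hb
  have hab : ip B y a ≤ ip B y b := hmax a ha.1.1
  exact (le_antisymm hab hba).trans hbe.symm

end Norm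

/-! ### Decomposability and atoms -/

section Decomp

variable {n : ℕ} {B : Matrix (Fin n) (Fin n) ℝ} {N : (Fin n → ℝ) → ℝ}

lemma e_mem_subdiff (hN : IsNorm N) (D : DecompStruct B N) (x : Fin n → ℝ) :
    D.e x ∈ subdiff B N x := by
  rw [D.subdiff_eq]
  exact ⟨0, (orth B (D.T x)).zero_mem, dualNorm_zero_le hN, by simp⟩

lemma add_mem_subdiff (D : DecompStruct B N) {x v : Fin n → ℝ} (hv : v ∈ orth B (D.T x))
    (h1 : dualNorm B N v ≤ 1) : D.e x + v ∈ subdiff B N x := by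
  rw [D.subdiff_eq]
  exact ⟨v, hv, h1, rfl⟩

lemma sub_mem_orth (D : DecompStruct B N) {x ξ : Fin n → ℝ} (h : ξ ∈ subdiff B N x) :
    ξ - D.e x ∈ orth B (D.T x) := by
  rw [D.subdiff_eq] at h
  obtain ⟨v, hv, -, rfl⟩ := h
  rwa [add_sub_cancel_left]

/-- Atoms lie in the dual unit ball, since the dual norm of an atom is its inner product with
another atom. -/
lemma atom_props (hB : B.PosDef) (hN : IsNorm N) (hExt : ∀ a ∈ extPts N, normu B a = 1)
    {a : Fin n → ℝ} (ha : a ∈ extPts N) :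
    ip B a a = 1 ∧ dualNorm B N a ≤ 1 ∧ N a = 1 := by
  have hu : ∀ a ∈ extPts N, ip B a a = 1 := fun a ha => by
    rw [← normu_sq hB, hExt a ha, one_pow]
  have h1 := hu a ha
  have h2 : dualNorm B N a ≤ 1 := by
    obtain ⟨b, hb, he⟩ := exists_extPt (B := B) hN a
    rw [← he]
    exact ip_le_one hB h1 (hu b hb)
  have h3 := ip_le_mul hN h2 a
  have h4 : N a ≤ 1 := ha.1
  exact ⟨h1, h2, by linarith⟩

/-- An atom is its own model vector: `a ∈ ∂N(a)` and `‖a‖ᵤ = 1 = ‖e a‖ᵤ`. -/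
lemma e_atom (hB : B.PosDef) (hN : IsNorm N) (hExt : ∀ a ∈ extPts N, normu B a = 1)
    (D : DecompStruct B N) {a : Fin n → ℝ} (ha : a ∈ extPts N) : D.e a = a := by
  obtain ⟨h1, h2, h3⟩ := atom_props hB hN hExt ha
  have hv := sub_mem_orth D ((mem_subdiff_iff hN).2 ⟨h2, h1.trans h3.symm⟩)
  have he := ((mem_subdiff_iff hN).1 (e_mem_subdiff hN D a)).2
  have ho := hv _ (D.e_mem a)
  have hz : ip B (a - D.e a) (a - D.e a) = 0 := by
    rw [ip_sub_right] at ho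
    rw [ip_sub_left, ip_sub_right, ip_sub_right, ip_comm hB a (D.e a)]
    linarith
  exact (sub_eq_zero.1 (eq_zero_of_ip_self hB hz)).symm

lemma subdiff_atom (hB : B.PosDef) (hN : IsNorm N) (hExt : ∀ a ∈ extPts N, normu B a = 1)
    (D : DecompStruct B N) {a ξ : Fin n → ℝ} (ha : a ∈ extPts N)
    (hξ : dualNorm B N ξ ≤ 1) (h : ip B ξ a = 1) : ξ - a ∈ orth B (D.T a) := by
  have := sub_mem_orth D ((mem_subdiff_iff hN).2 ⟨hξ, h.trans (atom_props hB hN hExt ha).2.2.symm⟩)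
  rwa [e_atom hB hN hExt D ha] at this

lemma dualNorm_e_add (hN : IsNorm N) (D : DecompStruct B N) {x v : Fin n → ℝ}
    (hv : v ∈ orth B (D.T x)) (h1 : dualNorm B N v ≤ 1) : dualNorm B N (D.e x + v) ≤ 1 :=
  ((mem_subdiff_iff hN).1 (add_mem_subdiff D hv h1)).1

/-- The complement `T_xᗮ` is closed under passing from `v`, in the dual unit ball, to an atom at
which `v` attains its maximal value `1`. The relation is symmetrised through `e x ∈ T_aᗮ`. -/
lemma atom_mem_orth (hB : B.PosDef) (hN : IsNorm N) (hExt : ∀ a ∈ extPts N, normu B a = 1)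
    (D : DecompStruct B N) {x v a : Fin n → ℝ} (hv : v ∈ orth B (D.T x))
    (hv1 : dualNorm B N v ≤ 1) (ha : a ∈ extPts N) (hva : ip B v a = 1) :
    a ∈ orth B (D.T x) := by
  obtain ⟨-, ha1, hNa⟩ := atom_props hB hN hExt ha
  have hplus := dualNorm_e_add hN D hv hv1
  have hminus := dualNorm_e_add hN D ((orth B (D.T x)).neg_mem hv) (dualNorm_neg_le hN hv1)
  obtain ⟨he1, hex⟩ := (mem_subdiff_iff hN).1 (e_mem_subdiff hN D x)
  have hea : ip B (D.e x) a = 0 := by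
    have h1 := ip_le_mul hN hplus a
    have h2 := ip_le_mul hN hminus (-a)
    rw [hN.neg] at h2
    rw [ip_add_left] at h1
    simp only [ip, mulVec_neg, dotProduct_neg, add_dotProduct, neg_dotProduct] at h1 h2 hva ⊢
    linarith
  -- Both `v` and `e x + v` are subgradients at `a`, hence `e x ∈ T_aᗮ`.
  have hva' := subdiff_atom hB hN hExt D ha hv1 hva
  have heva := subdiff_atom hB hN hExt D ha hplus (by rw [ip_add_left, hea, hva, zero_add])
  have heorth : D.e x ∈ orth B (D.T a) := by
    have := (orth B (D.T a)).sub_mem heva hva'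
    convert this using 1
    abel
  have hae := dualNorm_e_add hN D heorth he1
  have hae' := dualNorm_e_add hN D ((orth B (D.T a)).neg_mem heorth) (dualNorm_neg_le hN he1)
  rw [e_atom hB hN hExt D ha] at hae hae'
  have hax : ip B a x = 0 := by
    have h1 := ip_le_mul hN hae x
    have h2 := ip_le_mul hN hae' (-x)
    rw [hN.neg] at h2
    rw [ip_add_left] at h1
    simp only [ip, mulVec_neg, dotProduct_neg, add_dotProduct, neg_dotProduct] at h1 h2 hex ⊢
    linarith
  have := sub_mem_orth D ((mem_subdiff_iff hN).2 ⟨hae, by rw [ip_add_left, hax, hex, zero_add]⟩)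
  simpa using this

/-- A nonzero vector splits off an atom at which its dual norm is attained; the remainder is
orthogonal to the tangent space of that atom. -/
lemma exists_atom (hB : B.PosDef) (hN : IsNorm N) (hExt : ∀ a ∈ extPts N, normu B a = 1)
    (D : DecompStruct B N) {w : Fin n → ℝ} (hw : w ≠ 0) :
    ∃ σ : ℝ, 0 < σ ∧ ∃ a ∈ extPts N, w - σ • a ∈ orth B (D.T a) ∧
      ∀ x, w ∈ orth B (D.T x) → a ∈ orth B (D.T x) := by
  obtain ⟨a, ha, hwa⟩ := exists_extPt (B := B) hN w
  set σ := dualNorm B N w with hσ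
  have hσ0 : 0 < σ := by
    refine lt_of_le_of_ne (dualNorm_nonneg hN w) fun h => ?_
    have h1 := ip_le_dualNorm (B := B) hN w w
    rw [← hσ, ← h, zero_mul] at h1
    exact absurd (ip_self_pos hB hw) (not_lt.2 h1)
  have hv1 : dualNorm B N (σ⁻¹ • w) ≤ 1 := by
    refine dualNorm_le_one hN fun x => ?_
    rw [ip_smul_left, inv_mul_le_iff₀ hσ0]
    exact ip_le_dualNorm hN w x
  have hva : ip B (σ⁻¹ • w) a = 1 := by
    rw [ip_smul_left, hwa, inv_mul_cancel₀ hσ0.ne']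
  refine ⟨σ, hσ0, a, ha, ?_, fun x hx =>
    atom_mem_orth hB hN hExt D ((orth B (D.T x)).smul_mem _ hx) hv1 ha hva⟩
  have := (orth B (D.T a)).smul_mem σ (subdiff_atom hB hN hExt D ha hv1 hva)
  rwa [smul_sub, smul_inv_smul₀ hσ0.ne'] at this

/-- The certificate is built as a sum of atoms. Working with the complements of several tangent
spaces at once lets the atoms already found be recorded in `X`, so that the dimension drops. -/
lemma exists_dual_certificate_aux (hB : B.PosDef) (hN : IsNorm N)
    (hExt : ∀ a ∈ extPts N, normu B a = 1) (D : DecompStruct B N) (d : ℕ) :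
    ∀ X : Set (Fin n → ℝ), Module.finrank ℝ (⨅ x ∈ X, orth B (D.T x) : Submodule ℝ _) = d →
      ∀ w ∈ (⨅ x ∈ X, orth B (D.T x) : Submodule ℝ _),
        ∃ y ∈ (⨅ x ∈ X, orth B (D.T x) : Submodule ℝ _),
          dualNorm B N y ≤ 1 ∧ N w ≤ ip B y w := by
  induction d using Nat.strong_induction_on with
  | _ d ih =>
    intro X hd w hw
    by_cases hw0 : w = 0
    · refine ⟨0, Submodule.zero_mem _, dualNorm_zero_le hN, ?_⟩
      rw [hw0, hN.zero, ip_zero_right]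
    obtain ⟨σ, hσ, a, ha, hrest, haX⟩ := exists_atom hB hN hExt D hw0
    obtain ⟨haa, -, hNa⟩ := atom_props hB hN hExt ha
    have haT : a ∈ D.T a := by
      have := D.e_mem a
      rwa [e_atom hB hN hExt D ha] at this
    have haM : a ∈ (⨅ x ∈ X, orth B (D.T x) : Submodule ℝ _) := by
      simp only [Submodule.mem_iInf] at hw ⊢
      exact fun x hx => haX x (hw x hx)
    have hins : (⨅ x ∈ insert a X, orth B (D.T x) : Submodule ℝ _) =
        orth B (D.T a) ⊓ ⨅ x ∈ X, orth B (D.T x) := iInf_insert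
    have hlt : (⨅ x ∈ insert a X, orth B (D.T x) : Submodule ℝ _) <
        ⨅ x ∈ X, orth B (D.T x) := by
      rw [hins]
      refine lt_of_le_of_ne inf_le_right fun h => ?_
      rw [← h] at haM
      have h0 := haM.1 a haT
      linarith
    have hw' : w - σ • a ∈ (⨅ x ∈ insert a X, orth B (D.T x) : Submodule ℝ _) := by
      rw [hins]
      exact ⟨hrest, Submodule.sub_mem _ hw (Submodule.smul_mem _ _ haM)⟩
    obtain ⟨y, hy, hy1, hyw⟩ := ih _ (hd ▸ Submodule.finrank_lt_finrank_of_lt hlt) _ rfl _ hw'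
    rw [hins] at hy
    have hsum := dualNorm_e_add hN D hy.1 hy1
    rw [e_atom hB hN hExt D ha] at hsum
    refine ⟨a + y, Submodule.add_mem _ haM hy.2, hsum, ?_⟩
    have htri := hN.triangle (σ • a) (w - σ • a)
    rw [add_sub_cancel, hN.smul_eq, hNa, abs_of_pos hσ] at htri
    have h1 := hrest a haT
    have h2 := hy.1 a haT
    rw [ip_comm hB] at h2
    rw [ip_sub_right, ip_smul_right] at h1 hyw
    rw [ip_add_left]
    rw [haa] at h1
    rw [h2] at hyw
    linarith

/-- On `T_xᗮ` the norm is dual to the section `T_xᗮ ∩ C` of the dual unit ball `C`. -/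
lemma exists_dual_certificate (hB : B.PosDef) (hN : IsNorm N)
    (hExt : ∀ a ∈ extPts N, normu B a = 1) (D : DecompStruct B N) {x w : Fin n → ℝ}
    (hw : w ∈ orth B (D.T x)) :
    ∃ y ∈ orth B (D.T x), dualNorm B N y ≤ 1 ∧ N w ≤ ip B y w := by
  have := exists_dual_certificate_aux hB hN hExt D _ {x} rfl w (by simpa using hw)
  simpa using this

/-- The subgradient inequality at `x₀` along the splitting `T ⊕ Tᗮ`. -/
lemma norm_sub_le (hB : B.PosDef) (hN : IsNorm N)
    (hExt : ∀ a ∈ extPts N, normu B a = 1) (D : DecompStruct B N) {x x₀ p w : Fin n → ℝ}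
    (hp : p ∈ D.T x₀) (hw : w ∈ orth B (D.T x₀)) (h : p + w = x - x₀) :
    N w - N p ≤ N x - N x₀ := by
  obtain ⟨y, hy, hy1, hyw⟩ := exists_dual_certificate hB hN hExt D hw
  have h1 := add_mem_subdiff D hy hy1 x
  have h2 := hw _ (D.e_mem x₀)
  have h3 := hy p hp
  rw [ip_comm hB] at h3
  have h4 := ip_le_mul hN ((mem_subdiff_iff hN).1 (e_mem_subdiff hN D x₀)).1 (-p)
  rw [hN.neg] at h4
  rw [← h, ip_add_right, ip_add_left, ip_add_left, h2, h3] at h1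
  have h5 : ip B (D.e x₀) (-p) = -ip B (D.e x₀) p := by simp [ip, mulVec_neg]
  linarith

/-- If `e x₀ = 0` then `x₀ = 0`, so `∂N(x₀)` is the whole dual ball and `T x₀` is trivial. -/
lemma K_pos (hB : B.PosDef) (hN : IsNorm N) (D : DecompStruct B N) {x₀ u : Fin n → ℝ}
    (hu : u ∈ D.T x₀) (hu0 : u ≠ 0) : 0 < Kfun B N D x₀ := by
  unfold Kfun
  rw [normu_sq hB]
  refine ip_self_pos hB fun he => ?_
  have h1 := ((mem_subdiff_iff hN).1 (e_mem_subdiff hN D x₀)).2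
  rw [he, ip_zero_left] at h1
  have hx0 : x₀ = 0 := (hN.eq_zero_iff _).1 h1.symm
  obtain ⟨h2, h3⟩ := (mem_subdiff_iff hN).1 (e_mem_subdiff hN D u)
  have h4 : D.e u ∈ subdiff B N x₀ :=
    (mem_subdiff_iff hN).2 ⟨h2, by rw [hx0, ip_zero_right, hN.zero]⟩
  have h5 := sub_mem_orth D h4 u hu
  rw [he, sub_zero, ip_comm hB, h3] at h5
  exact hu0 ((hN.eq_zero_iff _).1 h5)

/-- `ip B (gradf B A b x) (x - x₀)` and the loss gap, in terms of `h = x - x₀` and the noise. -/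
lemma loss_identities {m : ℕ} (hB : B.PosDef) (A : Matrix (Fin m) (Fin n) ℝ)
    {x₀ x : Fin n → ℝ} {z b : Fin m → ℝ} (hb : b = A.mulVec x₀ + z) :
    ip B (gradf B A b x) (x - x₀) = sq2 (A.mulVec (x - x₀)) -
        ip B ((Astar B A).mulVec z) (x - x₀) ∧
    fls A b x - fls A b x₀ = (1 / 2) * sq2 (A.mulVec (x - x₀)) -
        ip B ((Astar B A).mulVec z) (x - x₀) := by
  have h1 : A.mulVec x - b = A.mulVec (x - x₀) - z := by
    rw [hb, mulVec_sub]; abel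
  have h2 : A.mulVec x₀ - b = -z := by rw [hb]; abel
  unfold gradf fls
  rw [ip_astar hB, ip_astar hB, h1, h2]
  set g := A.mulVec (x - x₀)
  unfold sq2
  simp only [sub_dotProduct, dotProduct_sub, neg_dotProduct, dotProduct_neg]
  rw [dotProduct_comm g z]
  exact ⟨trivial, by ring⟩

/-- What near-optimality `ω_λ(x) ≤ δ λ` says, tested against `h = x - x₀`. The minimum in `ω_λ`
enters only through the infimum, by letting the slack `ε` tend to `0`. -/
lemma omega_test {m : ℕ} (hN : IsNorm N) (D : DecompStruct B N)
    (A : Matrix (Fin m) (Fin n) ℝ) {x₀ x : Fin n → ℝ} {b : Fin m → ℝ}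
    {lam t : ℝ} (hlam : 0 < lam) (hω : omega B A b N lam x ≤ t) :
    lam * (N x - N x₀) + ip B (gradf B A b x) (x - x₀) ≤ t * N (x - x₀) := by
  have key : ∀ ε > 0, lam * (N x - N x₀) + ip B (gradf B A b x) (x - x₀) ≤
      (t + ε) * N (x - x₀) := by
    intro ε hε
    obtain ⟨_, ⟨ξ, hξ, rfl⟩, hlt⟩ := exists_lt_of_csInf_lt
      (s := (fun ξ => dualNorm B N (lam • ξ + gradf B A b x)) '' subdiff B N x)
      ⟨_, _, e_mem_subdiff hN D x, rfl⟩ (lt_of_le_of_lt hω (lt_add_of_pos_right t hε))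
    have h1 := ip_le_mul hN hlt.le (x - x₀)
    rw [ip_add_left, ip_smul_left] at h1
    have h2 := hξ x₀
    have h3 : ip B ξ (x₀ - x) = -ip B ξ (x - x₀) := by rw [ip_sub_right, ip_sub_right]; ring
    have h4 : N x - N x₀ ≤ ip B ξ (x - x₀) := by linarith
    have h5 := mul_le_mul_of_nonneg_left h4 hlam.le
    linarith
  have hlim : Filter.Tendsto (fun ε : ℝ => (t + ε) * N (x - x₀)) (nhdsWithin 0 (Set.Ioi 0))
      (nhds ((t + 0) * N (x - x₀))) :=
    ((by fun_prop : Continuous fun ε : ℝ => (t + ε) * N (x - x₀)).tendsto 0).mono_left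
      nhdsWithin_le_nhds
  have := ge_of_tendsto hlim (Filter.eventually_of_mem self_mem_nhdsWithin key)
  rwa [add_zero] at this

end Decomp

/-! ### The estimate -/

/-- **Lemma 1.** If `ω_λ(x) ≤ δ λ` and `ρ₋(A, c (1+γ)² k₀) > 0`, then both
`‖x - x₀‖` and `(φ_λ(x) - φ_λ(x₀)) / (δ λ)` are bounded by
`c k₀ (1+γ) ((1+δ) λ + ‖A* z‖*) / ρ₋(A, c (1+γ)² k₀)`. -/
theorem lemma_one {n m : ℕ}
    (B : Matrix (Fin n) (Fin n) ℝ) (hB : B.PosDef)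
    (N : (Fin n → ℝ) → ℝ) (hN : IsNorm N)
    (hExt : ∀ a ∈ extPts N, normu B a = 1)
    (D : DecompStruct B N)
    (A : Matrix (Fin m) (Fin n) ℝ) (x₀ : Fin n → ℝ) (z b : Fin m → ℝ)
    (hb : b = A.mulVec x₀ + z)
    (k₀ : ℝ) (hk₀ : k₀ = Kfun B N D x₀)
    (c : ℝ)
    (hc : IsGreatest {ρ : ℝ | ∃ u ∈ D.T x₀, u ≠ 0 ∧
      ρ = (N u) ^ 2 / (k₀ * (normu B u) ^ 2)} c)
    (δ lam : ℝ) (hδ0 : 0 < δ) (hδ1 : δ < 1) (hlam : 0 < lam)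
    (hz : dualNorm B N ((Astar B A).mulVec z) < lam * (1 - δ))
    (γ : ℝ)
    (hγ : γ = (lam * (1 + δ) + dualNorm B N ((Astar B A).mulVec z)) /
        (lam * (1 - δ) - dualNorm B N ((Astar B A).mulVec z)))
    (ρ : ℝ) (hρ : IsLowerRIP B N A (c * (1 + γ) ^ 2 * k₀) ρ)
    (x : Fin n → ℝ) (hω : omega B A b N lam x ≤ δ * lam) :
    max (N (x - x₀)) ((phi A b N lam x - phi A b N lam x₀) / (δ * lam)) ≤
      c * k₀ * (1 + γ) * ((1 + δ) * lam + dualNorm B N ((Astar B A).mulVec z)) / ρ := by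
  obtain ⟨⟨u, hu, hu0, -⟩, hcmax⟩ := hc
  have hk : 0 < k₀ := hk₀ ▸ K_pos hB hN D hu hu0
  obtain ⟨hρ0, hrip⟩ := hρ
  set s := dualNorm B N ((Astar B A).mulVec z) with hs
  have hs0 : 0 ≤ s := dualNorm_nonneg hN _
  set h := x - x₀ with hh
  obtain ⟨p, hp, w, hw, hpw⟩ := exists_split hB (D.T x₀) h
  have htest := omega_test (x₀ := x₀) hN D A hlam hω
  obtain ⟨hgrad, hloss⟩ := loss_identities (x := x) hB A hb
  rw [← hh] at htest hgrad hloss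
  set S := sq2 (A.mulVec h) with hS
  have hS0 : 0 ≤ S := by
    rw [hS, sq2]
    exact Finset.sum_nonneg fun i _ => mul_self_nonneg _
  have hzh : ip B ((Astar B A).mulVec z) h ≤ s * N h := ip_le_dualNorm hN _ _
  have hsplit := norm_sub_le hB hN hExt D hp hw (hpw.trans hh)
  have hNp := hN.nonneg p
  have hNw := hN.nonneg w
  have htri : N h ≤ N p + N w := hpw ▸ hN.triangle p w
  set P := lam * (1 + δ) + s with hP
  set Q := lam * (1 - δ) - s with hQ
  have hQ0 : 0 < Q := sub_pos.2 hz
  have hP0 : 0 < P := by positivity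
  have hγ0 : 0 < γ := hγ ▸ div_pos hP0 hQ0
  have hγQ : γ * Q = P := by rw [hγ]; exact div_mul_cancel₀ _ hQ0.ne'
  have hbasic : Q * N w + S ≤ P * N p := by
    have h1 := mul_le_mul_of_nonneg_left hsplit hlam.le
    have h2 := mul_le_mul_of_nonneg_left htri (by positivity : 0 ≤ δ * lam + s)
    rw [hP, hQ]
    linarith
  have hcone : N w ≤ γ * N p := by
    refine le_of_mul_le_mul_left ?_ hQ0
    calc Q * N w ≤ P * N p := by linarith
      _ = Q * (γ * N p) := by rw [← hγQ]; ring
  have hNh : N h ≤ (1 + γ) * N p := by linarith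
  have hpu : ip B p p ≤ ip B h h := by
    have h1 := hw p hp
    have h2 := ip_self_nonneg hB w
    rw [← hpw, ip_add_left, ip_add_right, ip_add_right, ip_comm hB w p, h1]
    linarith
  have hc0 : 0 ≤ c := by
    refine le_trans ?_ (hcmax ⟨u, hu, hu0, rfl⟩)
    positivity
  have hpc : (N p) ^ 2 ≤ c * k₀ * ip B h h := by
    refine le_trans ?_ (mul_le_mul_of_nonneg_left hpu (by positivity))
    by_cases hp0 : p = 0
    · simp [hp0, hN.zero, ip_zero_right]
    have h1 := hcmax ⟨p, hp, hp0, rfl⟩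
    rw [normu_sq hB, div_le_iff₀ (mul_pos hk (ip_self_pos hB hp0))] at h1
    linarith
  have hR := hrip h (by
    rw [normu_sq hB]
    calc (N h) ^ 2 ≤ ((1 + γ) * N p) ^ 2 := pow_le_pow_left₀ (hN.nonneg h) hNh 2
      _ = (1 + γ) ^ 2 * (N p) ^ 2 := by ring
      _ ≤ (1 + γ) ^ 2 * (c * k₀ * ip B h h) := by gcongr
      _ = c * (1 + γ) ^ 2 * k₀ * ip B h h := by ring)
  rw [normu_sq hB, ← hS] at hR
  have hRp : ρ * ip B h h ≤ P * N p := by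
    have := mul_nonneg hQ0.le hNw
    linarith
  have hpb : N p * ρ ≤ c * k₀ * P := by
    rcases hNp.eq_or_lt with h0 | h0
    · rw [← h0]
      simp only [zero_mul]
      positivity
    refine le_of_mul_le_mul_right ?_ h0
    calc N p * ρ * N p = ρ * (N p) ^ 2 := by ring
      _ ≤ ρ * (c * k₀ * ip B h h) := by gcongr
      _ = c * k₀ * (ρ * ip B h h) := by ring
      _ ≤ c * k₀ * (P * N p) := by gcongr
      _ = c * k₀ * P * N p := by ring
  have hmain : N h ≤ c * k₀ * (1 + γ) * ((1 + δ) * lam + s) / ρ := by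
    rw [le_div_iff₀ hρ0]
    calc N h * ρ ≤ (1 + γ) * N p * ρ := by gcongr
      _ = (1 + γ) * (N p * ρ) := by ring
      _ ≤ (1 + γ) * (c * k₀ * P) := by gcongr
      _ = c * k₀ * (1 + γ) * ((1 + δ) * lam + s) := by rw [hP]; ring
  refine max_le hmain (le_trans ?_ hmain)
  rw [div_le_iff₀ (by positivity)]
  unfold phi
  linarith

end PGH
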